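/- Let p(t) = Σ_{k≥0} a_k t^k be a power series with |a_k| < 1 for all k and Σ |a_k| ≤ 1, with iterates p^[n] having coefficients a_k^[n]. If the constant terms a₀^[n] converge to a, then for every t ∈ (-1,1), p^[n](t) → a as n → ∞. -/

import Mathlib

open Filter Topology

/-- Coefficient of `t^k` in the composition `p ∘ q` of power series with coefficient
sequences `a` and `b`. -/
noncomputable def compCoeff (a b : ℕ → ℝ) (k : ℕ) : ℝ :=
  ∑' i : ℕ, a i * ∑ f ∈ Finset.Nat.antidiagonalTuple i k, ∏ l, b (f l)

/-- Coefficients of the iterates: `iterCoeff a (n-1) k = a_k^[n]`, with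
`iterCoeff a 0 = a` the coefficients of `p^[1] = p`. -/
noncomputable def iterCoeff (a : ℕ → ℝ) : ℕ → ℕ → ℝ
  | 0 => a
  | n + 1 => compCoeff a (iterCoeff a n)

lemma abs_tsum_le {f : ℕ → ℝ} (hf : Summable fun k => |f k|) : |∑' k, f k| ≤ ∑' k, |f k| := by
  have hf' : Summable fun k => ‖f k‖ := by simpa only [Real.norm_eq_abs] using hf
  simpa only [Real.norm_eq_abs] using norm_tsum_le_tsum_norm hf'

noncomputable def tup (b : ℕ → ℝ) (i k : ℕ) : ℝ :=
  ∑ f ∈ Finset.Nat.antidiagonalTuple i k, ∏ l, b (f l)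

lemma tup_zero (b : ℕ → ℝ) (k : ℕ) : tup b 0 k = if k = 0 then 1 else 0 := by
  cases k <;> simp [tup]

lemma tup_succ (b : ℕ → ℝ) (i k : ℕ) :
    tup b (i + 1) k = ∑ kl ∈ Finset.HasAntidiagonal.antidiagonal k, b kl.1 * tup b i kl.2 := by
  unfold tup
  simp_rw [Finset.mul_sum]
  rw [Finset.sum_sigma']
  refine Finset.sum_bij' (fun f _ => ⟨(f 0, ∑ l : Fin i, f l.succ), fun l => f l.succ⟩)
    (fun x _ => Fin.cons x.1.1 x.2) ?_ ?_ ?_ ?_ ?_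
  · intro f hf
    simp only [Finset.Nat.mem_antidiagonalTuple, Fin.sum_univ_succ] at hf
    simp [Finset.Nat.mem_antidiagonalTuple, hf]
  · rintro ⟨⟨x, y⟩, g⟩ h
    simp only [Finset.mem_sigma, Finset.HasAntidiagonal.mem_antidiagonal, Finset.Nat.mem_antidiagonalTuple] at h
    simp only [Finset.Nat.mem_antidiagonalTuple, Fin.sum_univ_succ, Fin.cons_zero, Fin.cons_succ]
    rw [h.2, h.1]
  · intro f hf
    exact Fin.cons_self_tail f
  · rintro ⟨⟨x, y⟩, g⟩ h
    simp only [Finset.mem_sigma, Finset.HasAntidiagonal.mem_antidiagonal, Finset.Nat.mem_antidiagonalTuple] at h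
    simp [h.2]
  · intro f hf
    simp [Fin.prod_univ_succ]

lemma tup_sum (b : ℕ → ℝ) (hb : Summable fun k => |b k|) (i : ℕ) :
    (Summable fun k => |tup b i k|) ∧ ∑' k, tup b i k = (∑' k, b k) ^ i := by
  induction i with
  | zero =>
    simp_rw [tup_zero]
    constructor
    · apply summable_of_ne_finset_zero (s := {0})
      intro k hk
      simp at hk
      simp [hk]
    · simp
  | succ i ih =>
    simp_rw [tup_succ]
    have hb' : Summable fun k => ‖b k‖ := by simpa only [Real.norm_eq_abs] using hb
    have ht' : Summable fun k => ‖tup b i k‖ := by simpa only [Real.norm_eq_abs] using ih.1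
    constructor
    · have := summable_norm_sum_mul_antidiagonal_of_summable_norm hb' ht'
      simpa only [Real.norm_eq_abs] using this
    · rw [← tsum_mul_tsum_eq_tsum_sum_antidiagonal_of_summable_norm hb' ht', ih.2, pow_succ']

lemma tup_mul_pow (b : ℕ → ℝ) (t : ℝ) (i k : ℕ) :
    tup (fun j => b j * t ^ j) i k = tup b i k * t ^ k := by
  unfold tup
  rw [Finset.sum_mul]
  refine Finset.sum_congr rfl fun f hf => ?_
  rw [Finset.Nat.mem_antidiagonalTuple] at hf
  rw [Finset.prod_mul_distrib, Finset.prod_pow_eq_pow_sum, hf]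

lemma abs_tup_le (b : ℕ → ℝ) (i k : ℕ) : |tup b i k| ≤ tup (fun j => |b j|) i k := by
  unfold tup
  refine (Finset.abs_sum_le_sum_abs _ _).trans (le_of_eq ?_)
  simp_rw [Finset.abs_prod]

lemma summable_mul_pow (b : ℕ → ℝ) (hb : Summable fun k => |b k|) {t : ℝ} (ht : |t| ≤ 1) :
    Summable fun k => |b k * t ^ k| := by
  refine hb.of_nonneg_of_le (fun _ => abs_nonneg _) fun k => ?_
  rw [abs_mul, abs_pow]
  exact mul_le_of_le_one_right (abs_nonneg _) (pow_le_one₀ (abs_nonneg _) ht)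

lemma tup_abs_tsum (b : ℕ → ℝ) (hb : Summable fun k => |b k|) (hb1 : ∑' k, |b k| ≤ 1) (i : ℕ) :
    (Summable fun k => |tup b i k|) ∧ ∑' k, |tup b i k| ≤ 1 := by
  have h1 := (tup_sum b hb i).1
  refine ⟨h1, ?_⟩
  have h2 := tup_sum (fun j => |b j|) (by simpa using hb) i
  calc ∑' k, |tup b i k| ≤ ∑' k, tup (fun j => |b j|) i k :=
        h1.tsum_le_tsum (abs_tup_le b i) h2.1.of_abs
    _ = (∑' k, |b k|) ^ i := h2.2
    _ ≤ 1 := pow_le_one₀ (tsum_nonneg fun _ => abs_nonneg _) hb1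

lemma dbl_summable (a b : ℕ → ℝ) (ha : Summable fun k => |a k|)
    (hb : Summable fun k => |b k|) (hb1 : ∑' k, |b k| ≤ 1) :
    Summable fun x : ℕ × ℕ => |a x.1 * tup b x.1 x.2| := by
  rw [summable_prod_of_nonneg (fun _ => abs_nonneg _)]
  constructor
  · intro i
    simp_rw [abs_mul]
    exact (tup_abs_tsum b hb hb1 i).1.mul_left _
  · refine ha.of_nonneg_of_le (fun _ => tsum_nonneg fun _ => abs_nonneg _) fun i => ?_
    simp_rw [abs_mul]
    rw [tsum_mul_left]
    exact mul_le_of_le_one_right (abs_nonneg _) (tup_abs_tsum b hb hb1 i).2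

lemma comp_abs (a b : ℕ → ℝ) (ha : Summable fun k => |a k|) (ha1 : ∑' k, |a k| ≤ 1)
    (hb : Summable fun k => |b k|) (hb1 : ∑' k, |b k| ≤ 1) :
    (Summable fun k => |compCoeff a b k|) ∧ ∑' k, |compCoeff a b k| ≤ 1 := by
  have hd := dbl_summable a b ha hb hb1
  have hs : Summable fun x : ℕ × ℕ => |a x.2 * tup b x.2 x.1| := hd.prod_symm
  have hle : ∀ k, |compCoeff a b k| ≤ ∑' i, |a i * tup b i k| := fun k =>
    abs_tsum_le (f := fun i => a i * tup b i k) (hs.prod_factor k)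
  have hsum := hs.prod
  have h1 : Summable fun k => |compCoeff a b k| :=
    hsum.of_nonneg_of_le (fun _ => abs_nonneg _) hle
  refine ⟨h1, (h1.tsum_le_tsum hle hsum).trans ?_⟩
  have hc : ∑' k, ∑' i, |a i * tup b i k| = ∑' i, ∑' k, |a i * tup b i k| :=
    Summable.tsum_comm (f := fun i k => |a i * tup b i k|) hd
  rw [hc]
  refine le_trans (hd.prod.tsum_le_tsum (fun i => ?_) ha) ha1
  simp_rw [abs_mul]
  rw [tsum_mul_left]
  exact mul_le_of_le_one_right (abs_nonneg _) (tup_abs_tsum b hb hb1 i).2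

lemma comp_eval (a b : ℕ → ℝ) (ha : Summable fun k => |a k|)
    (hb : Summable fun k => |b k|) (hb1 : ∑' k, |b k| ≤ 1) (t : ℝ) (ht : |t| ≤ 1) :
    ∑' k, compCoeff a b k * t ^ k = ∑' i, a i * (∑' k, b k * t ^ k) ^ i := by
  have hd := dbl_summable a b ha hb hb1
  have hs : Summable fun x : ℕ × ℕ => a x.1 * tup b x.1 x.2 * t ^ x.2 := by
    refine Summable.of_norm_bounded hd fun x => ?_
    rw [Real.norm_eq_abs, abs_mul, abs_pow]
    exact mul_le_of_le_one_right (abs_nonneg _) (pow_le_one₀ (abs_nonneg _) ht)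
  have hc : ∑' k, ∑' i, a i * tup b i k * t ^ k = ∑' i, ∑' k, a i * tup b i k * t ^ k :=
    Summable.tsum_comm (f := fun i k => a i * tup b i k * t ^ k) hs
  have e1 : ∀ k, compCoeff a b k * t ^ k = ∑' i, a i * tup b i k * t ^ k := fun k => by
    rw [tsum_mul_right]; rfl
  simp_rw [e1]
  rw [hc]
  refine tsum_congr fun i => ?_
  rw [← (tup_sum _ (summable_mul_pow b hb ht) i).2, ← tsum_mul_left]
  refine tsum_congr fun k => ?_
  rw [tup_mul_pow, mul_assoc]

lemma iter_abs (a : ℕ → ℝ) (ha : Summable fun k => |a k|) (ha1 : ∑' k, |a k| ≤ 1) (n : ℕ) :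
    (Summable fun k => |iterCoeff a n k|) ∧ ∑' k, |iterCoeff a n k| ≤ 1 := by
  induction n with
  | zero => exact ⟨ha, ha1⟩
  | succ n ih => exact comp_abs a _ ha ha1 ih.1 ih.2

lemma iter_eval (a : ℕ → ℝ) (ha : Summable fun k => |a k|) (ha1 : ∑' k, |a k| ≤ 1) (n : ℕ)
    (t : ℝ) (ht : |t| ≤ 1) : ∑' k, iterCoeff a (n + 1) k * t ^ k =
      ∑' i, a i * (∑' k, iterCoeff a n k * t ^ k) ^ i :=
  comp_eval a _ ha (iter_abs a ha ha1 n).1 (iter_abs a ha ha1 n).2 t ht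

lemma eval_zero (b : ℕ → ℝ) : ∑' k, b k * (0 : ℝ) ^ k = b 0 := by
  rw [tsum_eq_single 0 (fun k hk => by simp [hk])]
  simp

lemma eval_abs_le (b : ℕ → ℝ) (hb : Summable fun k => |b k|) (hb1 : ∑' k, |b k| ≤ 1)
    (t : ℝ) (ht : |t| ≤ 1) : |∑' k, b k * t ^ k| ≤ 1 := by
  have h := summable_mul_pow b hb ht
  refine (abs_tsum_le h).trans (le_trans (h.tsum_le_tsum (fun k => ?_) hb) hb1)
  rw [abs_mul, abs_pow]
  exact mul_le_of_le_one_right (abs_nonneg _) (pow_le_one₀ (abs_nonneg _) ht)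

lemma abs_pow_sub (x c : ℝ) (k : ℕ) : |x ^ k - c ^ k| ≤ (|c| + |x - c|) ^ k - |c| ^ k := by
  induction k with
  | zero => simp
  | succ k ih =>
    have e : x ^ (k + 1) - c ^ (k + 1) = x * (x ^ k - c ^ k) + (x - c) * c ^ k := by ring
    have hx : |x| ≤ |c| + |x - c| := by
      calc |x| = |c + (x - c)| := by ring_nf
        _ ≤ _ := abs_add_le _ _
    rw [e]
    refine (abs_add_le _ _).trans ?_
    rw [abs_mul, abs_mul, abs_pow]
    have := mul_le_mul hx ih (abs_nonneg _) (by positivity)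
    rw [pow_succ', pow_succ']
    linarith

lemma pow_conv {u s : ℝ} (hu0 : 0 ≤ u) (hu : u ≤ 1) (hs0 : 0 ≤ s) (hs : s ≤ 1) (k : ℕ) :
    ((1 - s) * u + s) ^ k ≤ (1 - s) * u ^ k + s := by
  induction k with
  | zero => simp
  | succ k ih =>
    have hx : 0 ≤ (1 - s) * u + s := by
      have := mul_nonneg (sub_nonneg.2 hs) hu0
      linarith
    have h1 := mul_le_mul_of_nonneg_left ih hx
    have h2 : 0 ≤ s * (1 - s) * ((1 - u) * (1 - u ^ k)) :=
      mul_nonneg (mul_nonneg hs0 (sub_nonneg.2 hs))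
        (mul_nonneg (sub_nonneg.2 hu) (sub_nonneg.2 (pow_le_one₀ hu0 hu)))
    rw [pow_succ', pow_succ']
    nlinarith

lemma pow_conv2 {u s : ℝ} (hu0 : 0 ≤ u) (hu : u ≤ 1) (hs0 : 0 ≤ s) (hs : s ≤ 1) (k : ℕ)
    (hk : 2 ≤ k) :
    ((1 - s) * u + s) ^ k ≤ (1 - s) * u ^ k + s - s * (1 - s) * (1 - u) ^ 2 := by
  obtain ⟨m, rfl⟩ : ∃ m, k = m + 1 + 1 := ⟨k - 2, by omega⟩
  have ih := pow_conv hu0 hu hs0 hs (m + 1)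
  have hx : 0 ≤ (1 - s) * u + s := by
    have := mul_nonneg (sub_nonneg.2 hs) hu0
    linarith
  have h1 := mul_le_mul_of_nonneg_left ih hx
  have h3 : u ^ (m + 1) ≤ u := by
    rw [pow_succ']
    exact mul_le_of_le_one_right hu0 (pow_le_one₀ hu0 hu)
  have h2 : 0 ≤ s * (1 - s) * ((1 - u) * (u - u ^ (m + 1))) :=
    mul_nonneg (mul_nonneg hs0 (sub_nonneg.2 hs))
      (mul_nonneg (sub_nonneg.2 hu) (sub_nonneg.2 h3))
  rw [pow_succ' _ (m + 1), pow_succ' u (m + 1)]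
  nlinarith

/-- One step of the Schwarz-Pick type estimate. -/
lemma step (a : ℕ → ℝ) (ha : Summable fun k => |a k|) (ha1 : ∑' k, |a k| ≤ 1)
    (x c s : ℝ) (hx : |x| ≤ 1) (hc : |c| ≤ 1) (hs0 : 0 ≤ s) (hs : s ≤ 1)
    (h : |x - c| ≤ s * (1 - |c|)) (k0 : ℕ) (hk0 : 2 ≤ k0) :
    |∑' i, a i * x ^ i - ∑' i, a i * c ^ i| ≤
      s * (1 - |∑' i, a i * c ^ i|) - s * (1 - s) * (1 - |c|) ^ 2 * |a k0| := by
  set u := |c| with hu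
  have hu0 : 0 ≤ u := abs_nonneg c
  have sx := summable_mul_pow a ha hx
  have sc := summable_mul_pow a ha hc
  have su : Summable fun k => |a k| * u ^ k := by
    simpa [abs_mul, abs_pow] using sc
  have sd : Summable fun k => |a k * x ^ k - a k * c ^ k| := (sx.of_abs.sub sc.of_abs).abs
  rw [← sx.of_abs.tsum_sub sc.of_abs]
  refine (abs_tsum_le sd).trans ?_
  have hpc : |∑' i, a i * c ^ i| ≤ ∑' k, |a k| * u ^ k := by
    refine (abs_tsum_le sc).trans (le_of_eq ?_)
    simp [abs_mul, abs_pow, hu]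
  set D := s * (1 - s) * (1 - u) ^ 2 with hD
  have hD0 : 0 ≤ D := mul_nonneg (mul_nonneg hs0 (sub_nonneg.2 hs)) (sq_nonneg _)
  let e : ℕ → ℝ := fun k => if k = k0 then D * |a k0| else 0
  have he : HasSum e (D * |a k0|) := hasSum_ite_eq k0 _
  have hR : HasSum (fun k => s * (|a k| - |a k| * u ^ k) - e k)
      (s * (∑' k, |a k| - ∑' k, |a k| * u ^ k) - D * |a k0|) :=
    ((ha.hasSum.sub su.hasSum).mul_left s).sub he
  have hterm : ∀ k, |a k * x ^ k - a k * c ^ k| ≤ s * (|a k| - |a k| * u ^ k) - e k := by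
    intro k
    rw [← mul_sub, abs_mul]
    have h1 := abs_pow_sub x c k
    have h2 : (u + |x - c|) ^ k ≤ ((1 - s) * u + s) ^ k := by
      apply pow_le_pow_left₀ (by positivity)
      nlinarith
    by_cases hk : k = k0
    · subst hk
      have h3 := pow_conv2 hu0 hc hs0 hs k hk0
      have h4 : |x ^ k - c ^ k| ≤ s * (1 - u ^ k) - D := by linarith
      have := mul_le_mul_of_nonneg_left h4 (abs_nonneg (a k))
      simp only [e, if_true]
      linarith
    · have h3 := pow_conv hu0 hc hs0 hs k
      have h4 : |x ^ k - c ^ k| ≤ s * (1 - u ^ k) := by linarith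
      have := mul_le_mul_of_nonneg_left h4 (abs_nonneg (a k))
      simp only [e, if_neg hk]
      linarith
  have := sd.tsum_le_tsum hterm hR.summable
  rw [hR.tsum_eq] at this
  refine this.trans ?_
  have : s * (∑' k, |a k| - ∑' k, |a k| * u ^ k) ≤ s * (1 - |∑' i, a i * c ^ i|) :=
    mul_le_mul_of_nonneg_left (by linarith) hs0
  linarith

lemma dyn (a : ℕ → ℝ) (ha1 : ∀ k, |a k| < 1)
    (hs : Summable (fun k => |a k|)) (hsum : ∑' k : ℕ, |a k| ≤ 1)
    (x c : ℕ → ℝ) (hx : ∀ n, |x n| ≤ 1) (hc : ∀ n, |c n| ≤ 1)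
    (hxs : ∀ n, x (n + 1) = ∑' i, a i * x n ^ i) (hcs : ∀ n, c (n + 1) = ∑' i, a i * c n ^ i)
    (r : ℝ) (hr0 : 0 ≤ r) (hr : r < 1) (h0 : |x 0 - c 0| ≤ r * (1 - |c 0|))
    (α : ℝ) (hα : Tendsto c atTop (𝓝 α)) : Tendsto (fun n => x n - c n) atTop (𝓝 0) := by
  have hmono : ∀ n, |x n - c n| ≤ r * (1 - |c n|) := by
    intro n
    induction n with
    | zero => exact h0
    | succ n ih =>
      have := step a hs hsum (x n) (c n) r (hx n) (hc n) hr0 hr.le ih 2 le_rfl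
      rw [← hxs, ← hcs] at this
      have h2 : 0 ≤ r * (1 - r) * (1 - |c n|) ^ 2 * |a 2| :=
        mul_nonneg (mul_nonneg (mul_nonneg hr0 (by linarith)) (sq_nonneg _)) (abs_nonneg _)
      linarith
  have hα1 : |α| ≤ 1 := le_of_tendsto hα.abs (Eventually.of_forall hc)
  rcases hα1.eq_or_lt with hα1 | hα1
  · refine squeeze_zero_norm hmono ?_
    have : Tendsto (fun n => r * (1 - |c n|)) atTop (𝓝 (r * (1 - |α|))) :=
      (hα.abs.const_sub 1).const_mul r
    simpa [hα1] using this
  by_cases hk : ∃ k0, 2 ≤ k0 ∧ a k0 ≠ 0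
  · obtain ⟨k0, hk0, hne⟩ := hk
    set A := |a k0|
    have hA : 0 < A := abs_pos.2 hne
    have hA1 : A < 1 := ha1 k0
    set d := (1 - |α|) / 2 with hd
    have hd0 : 0 < d := by linarith
    have hd1 : d < 1 := by have := abs_nonneg α; linarith
    have hev : ∀ᶠ n in atTop, |c n| < 1 - d :=
      hα.abs.eventually_lt_const (by linarith)
    obtain ⟨N, hN⟩ := eventually_atTop.1 hev
    set κ := (1 - r) * d ^ 2 * A with hκ
    have hd2 : d ^ 2 ≤ 1 := pow_le_one₀ hd0.le hd1.le
    have hκ0 : 0 < κ := mul_pos (mul_pos (by linarith) (by positivity)) hA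
    have hκ1 : κ ≤ 1 :=
      mul_le_one₀ (mul_le_one₀ (by linarith) (by positivity) hd2) hA.le hA1.le
    have hq : ∀ n, |x (n + N) - c (n + N)| ≤ (r * (1 - κ) ^ n) * (1 - |c (n + N)|) := by
      intro n
      induction n with
      | zero => simpa using hmono N
      | succ n ih =>
        set s := r * (1 - κ) ^ n with hsdef
        have hs0 : 0 ≤ s := mul_nonneg hr0 (pow_nonneg (by linarith) _)
        have hsr : s ≤ r :=
          mul_le_of_le_one_right hr0 (pow_le_one₀ (by linarith) (by linarith))
        have := step a hs hsum _ _ s (hx (n + N)) (hc (n + N)) hs0 (by linarith) ih k0 hk0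
        rw [← hxs, ← hcs] at this
        have e1 : n + 1 + N = n + N + 1 := by omega
        rw [e1, pow_succ, ← mul_assoc, ← hsdef]
        refine this.trans ?_
        have hu1 := hN (n + N) (by omega)
        have hdu : d ^ 2 ≤ (1 - |c (n + N)|) ^ 2 := pow_le_pow_left₀ hd0.le (by linarith) 2
        have h3 : κ ≤ (1 - s) * (1 - |c (n + N)|) ^ 2 * A := by
          apply mul_le_mul_of_nonneg_right _ hA.le
          exact mul_le_mul (by linarith) hdu (by positivity) (by linarith)
        have h4 := mul_le_mul_of_nonneg_left h3 hs0
        have h5 : 0 ≤ s * κ * |c (n + N + 1)| := by positivity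
        nlinarith
    rw [← tendsto_add_atTop_iff_nat N]
    have hlim : Tendsto (fun n => r * (1 - κ) ^ n) atTop (𝓝 (r * 0)) :=
      (tendsto_pow_atTop_nhds_zero_of_lt_one (by linarith) (by linarith)).const_mul r
    rw [mul_zero] at hlim
    refine squeeze_zero_norm (fun n => (hq n).trans ?_) hlim
    exact mul_le_of_le_one_right (mul_nonneg hr0 (pow_nonneg (by linarith) _))
      (by have := abs_nonneg (c (n + N)); linarith)
  · push Not at hk
    have hlin : ∀ y, ∑' i, a i * y ^ i = a 0 + a 1 * y := by
      intro y
      rw [tsum_eq_sum (s := Finset.range 2)]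
      · simp [Finset.sum_range_succ]
      · intro k hk'
        rw [hk k (by simp at hk'; omega), zero_mul]
    have hg : ∀ n, |x n - c n| ≤ |a 1| ^ n * |x 0 - c 0| := by
      intro n
      induction n with
      | zero => simp
      | succ n ih =>
        have : x (n + 1) - c (n + 1) = a 1 * (x n - c n) := by
          rw [hxs, hcs, hlin, hlin]; ring
        rw [this, abs_mul, pow_succ', mul_assoc]
        exact mul_le_mul_of_nonneg_left ih (abs_nonneg _)
    have hlim := (tendsto_pow_atTop_nhds_zero_of_lt_one (abs_nonneg _) (ha1 1)).mul_const
      |x 0 - c 0|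
    rw [zero_mul] at hlim
    exact squeeze_zero_norm hg hlim

/-- For `p(t) = Σ a_k t^k` with `|a_k| < 1` and `Σ |a_k| ≤ 1`: if the constant terms
`a₀^[n]` of the iterates converge to `α`, then `p^[n](t) → α` for every `t ∈ (-1,1)`. -/
theorem stmt18 (a : ℕ → ℝ) (ha1 : ∀ k, |a k| < 1)
    (hsummable : Summable (fun k => |a k|)) (hsum : ∑' k : ℕ, |a k| ≤ 1)
    (α : ℝ) (h0 : Tendsto (fun n => iterCoeff a n 0) atTop (nhds α)) :
    ∀ t ∈ Set.Ioo (-1 : ℝ) 1,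
      Tendsto (fun n => ∑' k : ℕ, iterCoeff a n k * t ^ k) atTop (nhds α) := by
  intro t ht
  have ht' : |t| < 1 := abs_lt.2 ht
  have hz : |(0 : ℝ)| ≤ 1 := by simp
  let x : ℕ → ℝ := fun n => ∑' k : ℕ, iterCoeff a n k * t ^ k
  let c : ℕ → ℝ := fun n => ∑' k : ℕ, iterCoeff a n k * (0 : ℝ) ^ k
  have hc0 : c = fun n => iterCoeff a n 0 := funext fun n => eval_zero _
  have hcα : Tendsto c atTop (𝓝 α) := by rw [hc0]; exact h0
  have hfirst : |x 0 - c 0| ≤ |t| * (1 - |c 0|) := by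
    have := step a hsummable hsum t 0 |t| ht'.le hz (abs_nonneg _) ht'.le (by simp) 2 le_rfl
    have h2 : 0 ≤ |t| * (1 - |t|) * (1 - |(0 : ℝ)|) ^ 2 * |a 2| :=
      mul_nonneg (mul_nonneg (mul_nonneg (abs_nonneg _) (by linarith)) (sq_nonneg _))
        (abs_nonneg _)
    exact this.trans (by simp only [c, iterCoeff]; linarith)
  have hI := iter_abs a hsummable hsum
  have key := dyn a ha1 hsummable hsum x c
    (fun n => eval_abs_le _ (hI n).1 (hI n).2 t ht'.le)
    (fun n => eval_abs_le _ (hI n).1 (hI n).2 0 hz)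
    (fun n => iter_eval a hsummable hsum n t ht'.le)
    (fun n => iter_eval a hsummable hsum n 0 hz)
    |t| (abs_nonneg _) ht' hfirst α hcα
  have := key.add hcα
  simpa [x] using this
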